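/- arXiv:2512.09712 — 2 statements merged into one kernel-verified Lean document; each statement's English description precedes it below -/
import Mathlib

section
/- Let μ > 0, r > 0, 0 < α < 1, and 0 < k < 2/3. Let f : ℝⁿ → ℝ be a continuously differentiable μ-strongly convex function with global minimizer x*, write f* = f(x*), and let x : (0,∞) → ℝⁿ be a twice differentiable solution of ẍ(t) + (r/t^α)·ẋ(t) + ∇f(x(t)) = 0 for all t > 0. Define γ(t) = k·(r/(1−α))·t^{1−α} and E(t) = (r²k/2)·t^{−2α}·e^{γ(t)}·‖x(t) − x*‖² + r·k·t^{−α}·e^{γ(t)}·⟨x(t) − x*, ẋ(t)⟩ + (1/2)·e^{γ(t)}·‖ẋ(t)‖² + e^{γ(t)}·( f(x(t)) − f* ). Then E(t) ≥ e^{γ(t)}·( f(x(t)) − f* ) for all t > 0, and there exists T > 0 such that E is non-increasing on [T,∞). -/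
open scoped RealInnerProductSpace

/-!
Write `w = x - z` for the displacement from the reference point, `p(t) = r / t ^ α` for the damping
and `q(t) = α / t` for its logarithmic decay rate, so that `p' = -q p` and `γ' = k p`. Without its
weight `e ^ γ`, the Lyapunov function is
`k / 2 * ‖p w + v‖² + (1 - k) / 2 * ‖v‖² + (f(x) - f(z))`, which dominates `f(x) - f(z)`.
Along the flow the weighted function has derivative `-e ^ γ p D`, where `D` is a quadratic form in
`(w, v)` plus `k (⟪w, ∇f(x)⟫ - (f(x) - f(z)))`. Strong convexity bounds the last term below by
`k μ / 2 * ‖w‖²`. As `p` and `q` tend to `0`, the resulting lower bound for `D` tends to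
`(1 - 3 k / 2) ‖v‖² + k μ / 2 * ‖w‖²`, which is positive definite for `0 < k < 2 / 3`, so the
discriminant is eventually negative.
-/

open Filter Topology

section InnerProductSpace

variable {V : Type*} [NormedAddCommGroup V] [InnerProductSpace ℝ V]

lemma inner_quadratic_nonneg_of_discrim_nonpos {a b c : ℝ} (ha : 0 < a)
    (h : discrim a b c ≤ 0) (w v : V) : 0 ≤ a * ‖v‖ ^ 2 + b * ⟪w, v⟫ + c * ‖w‖ ^ 2 := by
  have complete_square : 4 * a * (a * ‖v‖ ^ 2 + b * ⟪w, v⟫ + c * ‖w‖ ^ 2)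
      = ‖(2 * a) • v + b • w‖ ^ 2 + -discrim a b c * ‖w‖ ^ 2 := by
    rw [norm_add_sq_real, real_inner_smul_left, real_inner_smul_right, real_inner_comm, norm_smul,
      norm_smul, mul_pow, mul_pow, Real.norm_eq_abs, Real.norm_eq_abs, sq_abs, sq_abs, discrim]
    ring
  refine nonneg_of_mul_nonneg_right (a := 4 * a) ?_ (by positivity)
  rw [complete_square]
  exact add_nonneg (sq_nonneg _) (mul_nonneg (neg_nonneg.2 h) (sq_nonneg _))

/-- The Lyapunov function of damped gradient flow without its exponential weight, as a function of
the current damping `p`, displacement `w` from the reference point, velocity `v` and objective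
gap `F`. -/
noncomputable def dampedEnergy (k p : ℝ) (w v : V) (F : ℝ) : ℝ :=
  k / 2 * p ^ 2 * ‖w‖ ^ 2 + k * p * ⟪w, v⟫ + 1 / 2 * ‖v‖ ^ 2 + F

lemma dampedEnergy_eq_norm_smul_add (k p : ℝ) (w v : V) (F : ℝ) :
    dampedEnergy k p w v F = k / 2 * ‖p • w + v‖ ^ 2 + (1 - k) / 2 * ‖v‖ ^ 2 + F := by
  rw [norm_add_sq_real, real_inner_smul_left, norm_smul, mul_pow, Real.norm_eq_abs, sq_abs,
    dampedEnergy]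
  ring

lemma le_dampedEnergy {k : ℝ} (hk0 : 0 ≤ k) (hk1 : k ≤ 1) (p : ℝ) (w v : V) (F : ℝ) :
    F ≤ dampedEnergy k p w v F := by
  rw [dampedEnergy_eq_norm_smul_add]
  have : 0 ≤ 1 - k := sub_nonneg.2 hk1
  exact le_add_of_nonneg_left (by positivity)

/-- The decay rate of the weighted `dampedEnergy` along damped gradient flow, divided by the weight
and by the damping `p`. Here `q` is the logarithmic decay rate of `p`, and `G` stands for
`⟪w, g⟫ - F`, with `g` the gradient and `F` the objective gap. -/
noncomputable def energyDissipation (k p q : ℝ) (w v : V) (G : ℝ) : ℝ :=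
  (1 - 3 / 2 * k) * ‖v‖ ^ 2 + k * (q - k * p) * ⟪w, v⟫ + k * p * (q - k * p / 2) * ‖w‖ ^ 2 + k * G

lemma hasDerivAt_exp_mul_dampedEnergy {k q t : ℝ} {γ p F : ℝ → ℝ} {w v : ℝ → V} {g : V}
    (hγ : HasDerivAt γ (k * p t) t) (hp : HasDerivAt p (-(q * p t)) t)
    (hw : HasDerivAt w (v t) t) (hv : HasDerivAt v (-(p t • v t) - g) t)
    (hF : HasDerivAt F ⟪g, v t⟫ t) :
    HasDerivAt (fun s => Real.exp (γ s) * dampedEnergy k (p s) (w s) (v s) (F s))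
      (-(Real.exp (γ t) * (p t * energyDissipation k (p t) q (w t) (v t) (⟪w t, g⟫ - F t)))) t := by
  have hpotential := ((hp.pow 2).const_mul (k / 2)).mul hw.norm_sq
  have hcross := (hp.const_mul k).mul (hw.inner ℝ hv)
  have hkinetic := hv.norm_sq.const_mul (1 / 2)
  refine (hγ.exp.mul (((hpotential.add hcross).add hkinetic).add hF)).congr_deriv ?_
  simp only [Pi.add_apply, Pi.mul_apply, Pi.pow_apply, inner_sub_right, inner_neg_right,
    real_inner_smul_right, real_inner_self_eq_norm_sq, real_inner_comm g (v t), energyDissipation]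
  push_cast
  ring

lemma energyDissipation_nonneg {k μ p q G : ℝ} {w v : V} (hk0 : 0 ≤ k) (hk1 : k < 2 / 3)
    (hdiscrim : discrim (1 - 3 / 2 * k) (k * (q - k * p))
      (k * (μ / 2 + p * (q - k * p / 2))) ≤ 0)
    (hG : μ / 2 * ‖w‖ ^ 2 ≤ G) : 0 ≤ energyDissipation k p q w v G := by
  calc 0 ≤ (1 - 3 / 2 * k) * ‖v‖ ^ 2 + k * (q - k * p) * ⟪w, v⟫
        + k * (μ / 2 + p * (q - k * p / 2)) * ‖w‖ ^ 2 :=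
      inner_quadratic_nonneg_of_discrim_nonpos (by linarith) hdiscrim w v
    _ = energyDissipation k p q w v (μ / 2 * ‖w‖ ^ 2) := by rw [energyDissipation]; ring
    _ ≤ energyDissipation k p q w v G := by unfold energyDissipation; gcongr

end InnerProductSpace

lemma eventually_discrim_energyDissipation_nonpos {ι : Type*} {l : Filter ι} {k μ : ℝ}
    {p q : ι → ℝ} (hμ : 0 < μ) (hk0 : 0 ≤ k) (hk1 : k < 2 / 3)
    (hp : Tendsto p l (𝓝 0)) (hq : Tendsto q l (𝓝 0)) :
    ∀ᶠ t in l, discrim (1 - 3 / 2 * k) (k * (q t - k * p t))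
      (k * (μ / 2 + p t * (q t - k * p t / 2))) ≤ 0 := by
  have hlim : Tendsto (fun t => k * (q t - k * p t) ^ 2
      - 4 * (1 - 3 / 2 * k) * (μ / 2 + p t * (q t - k * p t / 2))) l
      (𝓝 (k * (0 - k * 0) ^ 2 - 4 * (1 - 3 / 2 * k) * (μ / 2 + 0 * (0 - k * 0 / 2)))) :=
    (((hq.sub (hp.const_mul k)).pow 2).const_mul k).sub
      (((hp.mul (hq.sub ((hp.const_mul k).div_const 2))).const_add (μ / 2)).const_mul _)
  have hμk : 0 < (1 - 3 / 2 * k) * μ := mul_pos (by linarith) hμ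
  filter_upwards [hlim.eventually_le_const (u := 0) (by linarith)] with t ht
  calc discrim (1 - 3 / 2 * k) (k * (q t - k * p t)) (k * (μ / 2 + p t * (q t - k * p t / 2)))
      = k * (k * (q t - k * p t) ^ 2
        - 4 * (1 - 3 / 2 * k) * (μ / 2 + p t * (q t - k * p t / 2))) := by rw [discrim]; ring
    _ ≤ 0 := mul_nonpos_of_nonneg_of_nonpos hk0 ht

lemma eventually_antitoneOn_Ici_of_hasDerivAt_nonpos {φ φ' : ℝ → ℝ}
    (hφ : ∀ᶠ t in atTop, HasDerivAt φ (φ' t) t) (hφ' : ∀ᶠ t in atTop, φ' t ≤ 0) :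
    ∀ᶠ T in atTop, AntitoneOn φ (Set.Ici T) := by
  filter_upwards [eventually_forall_ge_atTop.2 hφ, eventually_forall_ge_atTop.2 hφ']
    with T hderiv hnonpos
  exact antitoneOn_of_hasDerivWithinAt_nonpos (convex_Ici T)
    (fun t ht => (hderiv t ht).continuousAt.continuousWithinAt)
    (fun t ht => (hderiv t (interior_subset ht)).hasDerivWithinAt)
    fun t ht => hnonpos t (interior_subset ht)

section HilbertSpace

variable {V : Type*} [NormedAddCommGroup V] [InnerProductSpace ℝ V] [CompleteSpace V]

lemma hasDerivAt_comp_inner_gradient {f : V → ℝ} {x : ℝ → V} {x' : V} {t : ℝ}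
    (hf : DifferentiableAt ℝ f (x t)) (hx : HasDerivAt x x' t) :
    HasDerivAt (fun s => f (x s)) ⟪gradient f (x t), x'⟫ t := by
  rw [inner_gradient_left]
  exact hf.hasFDerivAt.comp_hasDerivAt t hx

theorem eventually_antitoneOn_exp_mul_dampedEnergy {k μ : ℝ} (hμ : 0 < μ) (hk0 : 0 ≤ k)
    (hk1 : k < 2 / 3) {f : V → ℝ} {z : V} (hf : Differentiable ℝ f)
    (hsc : ∀ y, f z ≥ f y + ⟪gradient f y, z - y⟫ + μ / 2 * ‖z - y‖ ^ 2)
    {γ p q : ℝ → ℝ} (hγ : ∀ᶠ t in atTop, HasDerivAt γ (k * p t) t)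
    (hp : ∀ᶠ t in atTop, HasDerivAt p (-(q t * p t)) t) (hp0 : ∀ᶠ t in atTop, 0 ≤ p t)
    (hplim : Tendsto p atTop (𝓝 0)) (hqlim : Tendsto q atTop (𝓝 0))
    {x v a : ℝ → V} (hx : ∀ᶠ t in atTop, HasDerivAt x (v t) t)
    (hv : ∀ᶠ t in atTop, HasDerivAt v (a t) t)
    (hode : ∀ᶠ t in atTop, a t + p t • v t + gradient f (x t) = 0) :
    ∀ᶠ T in atTop, AntitoneOn
      (fun t => Real.exp (γ t) * dampedEnergy k (p t) (x t - z) (v t) (f (x t) - f z))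
      (Set.Ici T) := by
  apply eventually_antitoneOn_Ici_of_hasDerivAt_nonpos
  · filter_upwards [hγ, hp, hx, hv, hode] with t hγ hp hx hv hode
    have ha : a t = -(p t • v t) - gradient f (x t) := by
      rw [eq_sub_iff_add_eq, eq_neg_iff_add_eq_zero, add_right_comm, hode]
    exact hasDerivAt_exp_mul_dampedEnergy hγ hp (hx.sub_const z) (ha ▸ hv)
      ((hasDerivAt_comp_inner_gradient (hf (x t)) hx).sub_const (f z))
  · filter_upwards [hp0, eventually_discrim_energyDissipation_nonpos hμ hk0 hk1 hplim hqlim]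
      with t hp0 hdiscrim
    have hgap : μ / 2 * ‖x t - z‖ ^ 2 ≤ ⟪x t - z, gradient f (x t)⟫ - (f (x t) - f z) := by
      have h := hsc (x t)
      rw [← neg_sub (x t) z, inner_neg_right, norm_neg, real_inner_comm] at h
      linarith
    have hdissipation := energyDissipation_nonneg (v := v t) hk0 hk1 hdiscrim hgap
    exact neg_nonpos.2 (by positivity)

end HilbertSpace

/-- The damping coefficient of the generalized NAG flow `ẍ + (r / t ^ α) ẋ + ∇f(x) = 0`. -/
noncomputable def nagDamping (r α t : ℝ) : ℝ := r / t ^ α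

/-- The exponent `γ` of the Lyapunov weight: `k` times a primitive of `nagDamping r α`. Meaningful
only for `α ≠ 1`. -/
noncomputable def nagExponent (r α k t : ℝ) : ℝ := k * (r / (1 - α)) * t ^ (1 - α)

lemma nagDamping_eq_mul_rpow_neg (r α : ℝ) {t : ℝ} (ht : 0 ≤ t) :
    nagDamping r α t = r * t ^ (-α) := by
  rw [nagDamping, Real.rpow_neg ht, div_eq_mul_inv]

lemma hasDerivAt_nagDamping (r α : ℝ) {t : ℝ} (ht : 0 < t) :
    HasDerivAt (nagDamping r α) (-(α / t * nagDamping r α t)) t := by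
  refine ((hasDerivAt_const t r).div (Real.hasDerivAt_rpow_const (p := α) (Or.inl ht.ne'))
    (Real.rpow_pos_of_pos ht α).ne').congr_deriv ?_
  have := (Real.rpow_pos_of_pos ht α).ne'
  rw [Real.rpow_sub_one ht.ne', nagDamping]
  field_simp
  ring

lemma hasDerivAt_nagExponent (r k : ℝ) {α t : ℝ} (hα : α ≠ 1) (ht : 0 < t) :
    HasDerivAt (nagExponent r α k) (k * nagDamping r α t) t := by
  refine ((Real.hasDerivAt_rpow_const (p := 1 - α) (Or.inl ht.ne')).const_mul
    (k * (r / (1 - α)))).congr_deriv ?_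
  have : 1 - α ≠ 0 := sub_ne_zero.2 hα.symm
  rw [show 1 - α - 1 = -α by ring, nagDamping_eq_mul_rpow_neg r α ht.le]
  field_simp

lemma tendsto_nagDamping_atTop (r : ℝ) {α : ℝ} (hα : 0 < α) :
    Tendsto (nagDamping r α) atTop (𝓝 0) :=
  (tendsto_rpow_atTop hα).const_div_atTop r

section Lyapunov

variable {V : Type*} [NormedAddCommGroup V] [InnerProductSpace ℝ V]

/-- The Lyapunov function `E(t)` of the generalized NAG flow for the trajectory `x` with velocity
`v` and the reference point `z`. -/
noncomputable def nagLyapunov (r α k : ℝ) (f : V → ℝ) (z : V) (x v : ℝ → V) (t : ℝ) : ℝ :=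
  r ^ 2 * k / 2 * t ^ (-(2 * α)) * Real.exp (nagExponent r α k t) * ‖x t - z‖ ^ 2
    + r * k * t ^ (-α) * Real.exp (nagExponent r α k t) * ⟪x t - z, v t⟫
    + 1 / 2 * Real.exp (nagExponent r α k t) * ‖v t‖ ^ 2
    + Real.exp (nagExponent r α k t) * (f (x t) - f z)

lemma nagLyapunov_eq_exp_mul_dampedEnergy (r α k : ℝ) (f : V → ℝ) (z : V) (x v : ℝ → V) {t : ℝ}
    (ht : 0 ≤ t) :
    nagLyapunov r α k f z x v t = Real.exp (nagExponent r α k t)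
      * dampedEnergy k (nagDamping r α t) (x t - z) (v t) (f (x t) - f z) := by
  have hsq : t ^ (-(2 * α)) = (t ^ (-α)) ^ 2 := by
    rw [← Real.rpow_mul_natCast ht]
    congr 1
    push_cast
    ring
  rw [nagLyapunov, dampedEnergy, nagDamping_eq_mul_rpow_neg r α ht, hsq]
  ring

theorem generalized_nag_flow_lyapunov_general [CompleteSpace V] {μ r α k : ℝ} (hμ : 0 < μ)
    (hr : 0 ≤ r) (hα0 : 0 < α) (hα1 : α ≠ 1) (hk0 : 0 ≤ k) (hk1 : k < 2 / 3)
    {f : V → ℝ} {z : V} (hf : Differentiable ℝ f)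
    (hsc : ∀ y, f z ≥ f y + ⟪gradient f y, z - y⟫ + μ / 2 * ‖z - y‖ ^ 2)
    {x v a : ℝ → V} (hx : ∀ t, 0 < t → HasDerivAt x (v t) t)
    (hv : ∀ t, 0 < t → HasDerivAt v (a t) t)
    (hode : ∀ t, 0 < t → a t + (r / t ^ α) • v t + gradient f (x t) = 0) :
    (∀ t, 0 < t →
        nagLyapunov r α k f z x v t ≥ Real.exp (nagExponent r α k t) * (f (x t) - f z))
      ∧ ∃ T, 0 < T ∧ AntitoneOn (nagLyapunov r α k f z x v) (Set.Ici T) := by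
  have hpos : ∀ᶠ t : ℝ in atTop, 0 < t := eventually_gt_atTop 0
  have hdamping_nonneg : ∀ t, 0 < t → 0 ≤ nagDamping r α t := fun t ht =>
    div_nonneg hr (Real.rpow_nonneg ht.le α)
  have hdecay : Tendsto (fun t : ℝ => α / t) atTop (𝓝 0) := tendsto_id.const_div_atTop α
  have hanti := eventually_antitoneOn_exp_mul_dampedEnergy hμ hk0 hk1 hf hsc
    (hpos.mono fun _ => hasDerivAt_nagExponent r k hα1)
    (hpos.mono fun _ => hasDerivAt_nagDamping r α) (hpos.mono hdamping_nonneg)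
    (tendsto_nagDamping_atTop r hα0) hdecay (hpos.mono hx) (hpos.mono hv) (hpos.mono hode)
  refine ⟨fun t ht => ?_, ?_⟩
  · rw [nagLyapunov_eq_exp_mul_dampedEnergy r α k f z x v ht.le]
    exact mul_le_mul_of_nonneg_left (le_dampedEnergy hk0 (by linarith) _ _ _ _) (Real.exp_nonneg _)
  · obtain ⟨T, hT, hantiT⟩ := (hpos.and hanti).exists
    exact ⟨T, hT, hantiT.congr fun t ht =>
      (nagLyapunov_eq_exp_mul_dampedEnergy r α k f z x v (hT.le.trans ht)).symm⟩

end Lyapunov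

/-- Lyapunov function for the generalized NAG flow
`ẍ + (r/t^α)ẋ + ∇f(x) = 0` with `μ > 0`, `r > 0`, `0 < α < 1`, `0 < k < 2/3`:
with `γ(t) = k(r/(1−α))t^{1−α}`, the function
`E(t) = (r²k/2)t^{−2α}e^{γ(t)}‖x(t) − x*‖² + rk·t^{−α}e^{γ(t)}⟨x(t) − x*, ẋ(t)⟩
        + (1/2)e^{γ(t)}‖ẋ(t)‖² + e^{γ(t)}(f(x(t)) − f*)`
dominates `e^{γ(t)}(f(x(t)) − f*)` on `(0,∞)` and is non-increasing on some `[T,∞)`. -/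
theorem generalized_nag_flow_lyapunov {n : ℕ}
    (μ r α k : ℝ) (hμ : 0 < μ) (hr : 0 < r) (hα0 : 0 < α) (hα1 : α < 1)
    (hk0 : 0 < k) (hk1 : k < 2 / 3)
    (f : EuclideanSpace ℝ (Fin n) → ℝ)
    (xstar : EuclideanSpace ℝ (Fin n))
    (hf : ContDiff ℝ 1 f)
    (hmin : ∀ y, f xstar ≤ f y)
    (hsc : ∀ y z : EuclideanSpace ℝ (Fin n),
      f z ≥ f y + ⟪gradient f y, z - y⟫ + μ / 2 * ‖z - y‖ ^ 2)
    (x v a : ℝ → EuclideanSpace ℝ (Fin n))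
    (hx : ∀ t : ℝ, 0 < t → HasDerivAt x (v t) t)
    (hv : ∀ t : ℝ, 0 < t → HasDerivAt v (a t) t)
    (hode : ∀ t : ℝ, 0 < t →
      a t + (r / t ^ α) • v t + gradient f (x t) = 0) :
    (∀ t : ℝ, 0 < t →
        r ^ 2 * k / 2 * t ^ (-(2 * α)) *
            Real.exp (k * (r / (1 - α)) * t ^ (1 - α)) * ‖x t - xstar‖ ^ 2
          + r * k * t ^ (-α) *
              Real.exp (k * (r / (1 - α)) * t ^ (1 - α)) * ⟪x t - xstar, v t⟫
          + 1 / 2 * Real.exp (k * (r / (1 - α)) * t ^ (1 - α)) * ‖v t‖ ^ 2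
          + Real.exp (k * (r / (1 - α)) * t ^ (1 - α)) * (f (x t) - f xstar)
        ≥ Real.exp (k * (r / (1 - α)) * t ^ (1 - α)) * (f (x t) - f xstar))
      ∧ ∃ T : ℝ, 0 < T ∧
        AntitoneOn (fun t : ℝ =>
          r ^ 2 * k / 2 * t ^ (-(2 * α)) *
              Real.exp (k * (r / (1 - α)) * t ^ (1 - α)) * ‖x t - xstar‖ ^ 2
            + r * k * t ^ (-α) *
                Real.exp (k * (r / (1 - α)) * t ^ (1 - α)) * ⟪x t - xstar, v t⟫
            + 1 / 2 * Real.exp (k * (r / (1 - α)) * t ^ (1 - α)) * ‖v t‖ ^ 2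
            + Real.exp (k * (r / (1 - α)) * t ^ (1 - α)) * (f (x t) - f xstar))
          (Set.Ici T) :=
  generalized_nag_flow_lyapunov_general hμ hr.le hα0 hα1.ne hk0.le hk1
    (hf.differentiable one_ne_zero) (fun y => hsc y xstar) hx hv hode
end

section
/- Let μ > 0, let r > 3, and let f : ℝⁿ → ℝ be a continuously differentiable μ-strongly convex function with global minimizer x*. Let x : (0,∞) → ℝⁿ be a twice differentiable solution of ẍ(t) + (r/t)·ẋ(t) + ∇f(x(t)) = 0 for all t > 0. Then f(x(t)) − f(x*) = O( t^{−2r/3} ) as t → ∞. -/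
open scoped RealInnerProductSpace

/-!
Write `z = x - x*` and `w = ẋ + (2r / 3t) z`. In these variables the flow reads
`ż = w - (2r / 3t) z` and `ẇ = -(r / 3t) w + (2r (r - 3) / 9t²) z - ∇f(x)`, so all cross terms
cancel in the derivative of `𝓔 = f(x) - f(x*) + ‖w‖² / 2 - (r (r - 3) / 9t²) ‖z‖²`, leaving
`t 𝓔̇ + (2r / 3) 𝓔 = (2r / 3) (f(x) - f(x*) - ⟪∇f(x), z⟫ + ((r² - 9) / 9t²) ‖z‖²)`.
For large `t`, strong convexity makes the right-hand side nonpositive, so `t ^ (2r / 3) 𝓔` is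
nonincreasing, and quadratic growth of `f` around `x*` gives `f(x) - f(x*) ≤ 2 𝓔`.
-/

open Filter Set Topology

theorem antitoneOn_rpow_mul_of_mul_deriv_add_nonpos {p : ℝ} {L L' : ℝ → ℝ} {D : Set ℝ}
    (hD : Convex ℝ D) (hpos : D ⊆ Ioi 0) (hL : ∀ t ∈ D, HasDerivAt L (L' t) t)
    (hineq : ∀ t ∈ D, t * L' t + p * L t ≤ 0) :
    AntitoneOn (fun t ↦ t ^ p * L t) D := by
  have hderiv : ∀ t ∈ D,
      HasDerivAt (fun t ↦ t ^ p * L t) (t ^ (p - 1) * (t * L' t + p * L t)) t := by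
    intro t ht
    have ht0 : 0 < t := hpos ht
    refine ((Real.hasDerivAt_rpow_const (.inl ht0.ne')).mul (hL t ht)).congr_deriv ?_
    rw [Real.rpow_sub_one ht0.ne']
    field_simp
    ring
  refine antitoneOn_of_hasDerivWithinAt_nonpos hD
    (fun t ht ↦ (hderiv t ht).continuousAt.continuousWithinAt)
    (fun t ht ↦ (hderiv t (interior_subset ht)).hasDerivWithinAt) fun t ht ↦ ?_
  have ht' : t ∈ D := interior_subset ht
  exact mul_nonpos_of_nonneg_of_nonpos (Real.rpow_nonneg (le_of_lt (hpos ht')) _) (hineq t ht')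

theorem nonneg_of_le_mul_deriv {ψ ψ' : ℝ → ℝ} (hψ : ∀ s, 0 ≤ s → HasDerivAt ψ (ψ' s) s)
    (hψ0 : ψ 0 = 0) (hψ'0 : ψ' 0 = 0) (hle : ∀ s, 0 < s → ψ s ≤ s * ψ' s) {s : ℝ} (hs : 0 < s) :
    0 ≤ ψ s := by
  -- `ψ s / s` is nondecreasing and tends to `ψ' 0 = 0` as `s` decreases to `0`.
  have hanti : AntitoneOn (fun s ↦ s ^ (-1 : ℝ) * -ψ s) (Ioi 0) :=
    antitoneOn_rpow_mul_of_mul_deriv_add_nonpos (convex_Ioi 0) subset_rfl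
      (fun u hu ↦ (hψ u (le_of_lt hu)).neg) fun u hu ↦ by linarith [hle u hu]
  have hslope : Tendsto (fun u ↦ u⁻¹ * ψ u) (𝓝[>] 0) (𝓝 0) := by
    simpa [hψ0, hψ'0] using (hψ 0 le_rfl).tendsto_slope_zero_right
  have hquot : 0 ≤ s⁻¹ * ψ s := by
    refine le_of_tendsto hslope ?_
    filter_upwards [Ioo_mem_nhdsGT hs] with u hu
    simpa [Real.rpow_neg_one] using hanti hu.1 hs hu.2.le
  exact nonneg_of_mul_nonneg_right hquot (inv_pos.2 hs)

section StrongConvexity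

variable {E : Type*} [NormedAddCommGroup E] [InnerProductSpace ℝ E] [CompleteSpace E]
  {f : E → ℝ} {xstar : E} {μ : ℝ}

theorem hasDerivAt_comp_of_hasGradientAt {x : ℝ → E} {g v : E} {t : ℝ}
    (hf : HasGradientAt f g (x t)) (hx : HasDerivAt x v t) :
    HasDerivAt (fun t ↦ f (x t)) ⟪g, v⟫ t := by
  simpa [Function.comp_def] using hf.hasFDerivAt.comp_hasDerivAt t hx

theorem gradient_eq_zero_of_isLocalMin (h : IsLocalMin f xstar) : gradient f xstar = 0 := by
  rw [gradient, h.fderiv_eq_zero, map_zero]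

/-- Quasi-strong convexity: the strong convexity inequality, required only between an arbitrary
point and the reference point `xstar`, which in applications is a minimizer. -/
def IsQuasiStronglyConvexAt (μ : ℝ) (f : E → ℝ) (xstar : E) : Prop :=
  ∀ y, f y - f xstar + μ / 2 * ‖y - xstar‖ ^ 2 ≤ ⟪gradient f y, y - xstar⟫

theorem isQuasiStronglyConvexAt_of_strong_convexity
    (hsc : ∀ y z, f z ≥ f y + ⟪gradient f y, z - y⟫ + μ / 2 * ‖z - y‖ ^ 2) :
    IsQuasiStronglyConvexAt μ f xstar := by
  intro y
  have h := hsc y xstar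
  rw [← neg_sub y xstar, inner_neg_right, norm_neg] at h
  linarith

theorem IsQuasiStronglyConvexAt.quadratic_growth (hqsc : IsQuasiStronglyConvexAt μ f xstar)
    (hf : Differentiable ℝ f) (hcrit : gradient f xstar = 0) (y : E) :
    μ / 2 * ‖y - xstar‖ ^ 2 ≤ f y - f xstar := by
  set d := y - xstar with hd
  have hline (s : ℝ) : HasDerivAt
      (fun s : ℝ ↦ f (xstar + s • d) - f xstar - μ / 2 * ‖d‖ ^ 2 * s ^ 2)
      (⟪gradient f (xstar + s • d), d⟫ - μ * ‖d‖ ^ 2 * s) s := by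
    have hpath : HasDerivAt (fun s : ℝ ↦ xstar + s • d) d s := by
      simpa using ((hasDerivAt_id s).smul_const d).const_add xstar
    refine (((hasDerivAt_comp_of_hasGradientAt (hf _).hasGradientAt hpath).sub_const (f xstar)).sub
      ((hasDerivAt_pow 2 s).const_mul (μ / 2 * ‖d‖ ^ 2))).congr_deriv ?_
    push_cast
    ring
  suffices hle : ∀ s : ℝ, f (xstar + s • d) - f xstar - μ / 2 * ‖d‖ ^ 2 * s ^ 2
      ≤ s * (⟪gradient f (xstar + s • d), d⟫ - μ * ‖d‖ ^ 2 * s) by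
    simpa [hd] using nonneg_of_le_mul_deriv (fun s _ ↦ hline s) (by simp) (by simp [hcrit])
      (fun s _ ↦ hle s) one_pos
  intro s
  have h := hqsc (xstar + s • d)
  rw [add_sub_cancel_left, norm_smul, mul_pow, Real.norm_eq_abs, sq_abs,
    real_inner_smul_right] at h
  linarith

end StrongConvexity

section NagFlow

variable {E : Type*} [NormedAddCommGroup E] [InnerProductSpace ℝ E]
  {f : E → ℝ} {xstar : E} {μ r t : ℝ} {x v : ℝ → E}

/-- The velocity of `x` corrected by a multiple of the displacement from `xstar`. It is the vector
`x + (3t / 2r) ẋ - x*` of the Su–Boyd–Candès energy, rescaled so that `ẋ` has coefficient one. The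
curve `v` plays the role of `ẋ`. -/
noncomputable def shiftedVelocity (r : ℝ) (xstar : E) (x v : ℝ → E) (t : ℝ) : E :=
  v t + (2 * r / (3 * t)) • (x t - xstar)

/-- The Lyapunov function of the flow before multiplication by `t ^ (2r / 3)`, with `v` in the role
of `ẋ`. The last term is the correction that removes the cross terms from its derivative. -/
noncomputable def nagEnergy (r : ℝ) (f : E → ℝ) (xstar : E) (x v : ℝ → E) (t : ℝ) : ℝ :=
  f (x t) - f xstar + 1 / 2 * ‖shiftedVelocity r xstar x v t‖ ^ 2
    - r * (r - 3) / (9 * t ^ 2) * ‖x t - xstar‖ ^ 2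

theorem sub_le_two_mul_nagEnergy (ht : t ≠ 0) (htμ : 4 * (r * (r - 3)) ≤ 9 * μ * t ^ 2)
    (hgrowth : μ / 2 * ‖x t - xstar‖ ^ 2 ≤ f (x t) - f xstar) :
    f (x t) - f xstar ≤ 2 * nagEnergy r f xstar x v t := by
  have hcoeff : r * (r - 3) / (9 * t ^ 2) ≤ μ / 4 := by
    rw [div_le_iff₀ (by positivity)]
    linarith
  have hz := mul_le_mul_of_nonneg_right hcoeff (sq_nonneg ‖x t - xstar‖)
  unfold nagEnergy
  linarith [sq_nonneg ‖shiftedVelocity r xstar x v t‖]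

variable [CompleteSpace E]

/-- `IsNagFlowAt r f x v t` says that at time `t` the curve `x` has velocity `v` and satisfies
`ẍ + (r / t) ẋ + ∇f(x) = 0`, the continuous-time limit of Nesterov's accelerated gradient method.
The equation is encoded as the first-order system in `(x, v)`. -/
structure IsNagFlowAt (r : ℝ) (f : E → ℝ) (x v : ℝ → E) (t : ℝ) : Prop where
  hasDerivAt_position : HasDerivAt x (v t) t
  hasDerivAt_velocity : HasDerivAt v (-(r / t) • v t - gradient f (x t)) t

theorem isNagFlowAt_of_ode {a : E} (hx : HasDerivAt x (v t) t) (hv : HasDerivAt v a t)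
    (hode : a + (r / t) • v t + gradient f (x t) = 0) : IsNagFlowAt r f x v t :=
  ⟨hx, hv.congr_deriv (by rw [← sub_eq_zero, ← hode]; module)⟩

theorem IsNagFlowAt.hasDerivAt_shiftedVelocity (h : IsNagFlowAt r f x v t) (ht : t ≠ 0) :
    HasDerivAt (shiftedVelocity r xstar x v)
      (-(r / (3 * t)) • shiftedVelocity r xstar x v t
        + (2 * r * (r - 3) / (9 * t ^ 2)) • (x t - xstar) - gradient f (x t)) t := by
  have hcoeff : HasDerivAt (fun t : ℝ ↦ 2 * r / (3 * t)) (-(2 * r / (3 * t ^ 2))) t := by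
    refine ((hasDerivAt_const t (2 * r)).div ((hasDerivAt_id t).const_mul 3)
      (by simpa using ht)).congr_deriv ?_
    simp only [id_eq]
    field_simp
    ring
  refine (h.hasDerivAt_velocity.add
    (hcoeff.smul (h.hasDerivAt_position.sub_const xstar))).congr_deriv ?_
  unfold shiftedVelocity
  match_scalars <;> field_simp <;> ring

theorem IsNagFlowAt.hasDerivAt_nagEnergy (h : IsNagFlowAt r f x v t) (ht : t ≠ 0)
    (hf : DifferentiableAt ℝ f (x t)) :
    HasDerivAt (nagEnergy r f xstar x v)
      (2 * r / (3 * t) * (f (x t) - f xstar - ⟪gradient f (x t), x t - xstar⟫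
        + (r ^ 2 - 9) / (9 * t ^ 2) * ‖x t - xstar‖ ^ 2 - nagEnergy r f xstar x v t)) t := by
  have hcoeff : HasDerivAt (fun t : ℝ ↦ r * (r - 3) / (9 * t ^ 2))
      (-(2 * r * (r - 3) / (9 * t ^ 3))) t := by
    refine ((hasDerivAt_const t (r * (r - 3))).div ((hasDerivAt_pow 2 t).const_mul 9)
      (by positivity)).congr_deriv ?_
    field_simp
    ring
  have hv : v t = shiftedVelocity r xstar x v t - (2 * r / (3 * t)) • (x t - xstar) :=
    (add_sub_cancel_right _ _).symm
  have hw := h.hasDerivAt_shiftedVelocity (xstar := xstar) ht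
  have hfx := hasDerivAt_comp_of_hasGradientAt hf.hasGradientAt h.hasDerivAt_position
  refine (((hfx.sub_const (f xstar)).add (hw.norm_sq.const_mul (1 / 2))).sub
    (hcoeff.mul (h.hasDerivAt_position.sub_const xstar).norm_sq)).congr_deriv ?_
  simp only [nagEnergy, hv]
  generalize shiftedVelocity r xstar x v t = w, x t - xstar = z, gradient f (x t) = g
  simp only [inner_sub_right, inner_add_right, real_inner_smul_right, real_inner_self_eq_norm_sq,
    real_inner_comm w z, real_inner_comm g w]
  field_simp
  ring

theorem antitoneOn_rpow_mul_nagEnergy (hμ : 0 ≤ μ) (hr : 0 ≤ r) (hf : Differentiable ℝ f)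
    (hqsc : IsQuasiStronglyConvexAt μ f xstar)
    {T : ℝ} (hT : 0 < T) (hTμ : 2 * (r ^ 2 - 9) ≤ 9 * μ * T ^ 2)
    (hflow : ∀ t, T ≤ t → IsNagFlowAt r f x v t) :
    AntitoneOn (fun t ↦ t ^ (2 * r / 3) * nagEnergy r f xstar x v t) (Ici T) := by
  have hpos : Ici T ⊆ Ioi 0 := Ici_subset_Ioi.2 hT
  refine antitoneOn_rpow_mul_of_mul_deriv_add_nonpos (convex_Ici T) hpos
    (fun t ht ↦ (hflow t ht).hasDerivAt_nagEnergy (ne_of_gt (hpos ht)) (hf _)) fun t ht ↦ ?_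
  have ht0 : 0 < t := hpos ht
  have hcoeff : (r ^ 2 - 9) / (9 * t ^ 2) ≤ μ / 2 := by
    have : μ * T ^ 2 ≤ μ * t ^ 2 := by gcongr; exact ht
    rw [div_le_iff₀ (by positivity)]
    linarith
  have hdefect : f (x t) - f xstar - ⟪gradient f (x t), x t - xstar⟫
      + (r ^ 2 - 9) / (9 * t ^ 2) * ‖x t - xstar‖ ^ 2 ≤ 0 := by
    linarith [hqsc (x t), mul_le_mul_of_nonneg_right hcoeff (sq_nonneg ‖x t - xstar‖)]
  refine le_of_eq_of_le ?_
    (mul_nonpos_of_nonneg_of_nonpos (by positivity : 0 ≤ 2 * r / 3) hdefect)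
  field_simp
  ring

theorem sub_le_mul_rpow_of_isNagFlowAt (hμ : 0 ≤ μ) (hr : 0 ≤ r) (hf : Differentiable ℝ f)
    (hcrit : gradient f xstar = 0) (hqsc : IsQuasiStronglyConvexAt μ f xstar)
    {T : ℝ} (hT : 0 < T) (hTμ : 4 * r ^ 2 ≤ 9 * μ * T ^ 2)
    (hflow : ∀ t, T ≤ t → IsNagFlowAt r f x v t) (ht : T ≤ t) :
    f (x t) - f xstar
      ≤ 2 * (T ^ (2 * r / 3) * nagEnergy r f xstar x v T) * t ^ (-(2 * r / 3)) := by
  have ht0 : 0 < t := hT.trans_le ht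
  have htμ : 4 * (r * (r - 3)) ≤ 9 * μ * t ^ 2 := by
    have : μ * T ^ 2 ≤ μ * t ^ 2 := by gcongr
    linarith
  have henergy : t ^ (2 * r / 3) * nagEnergy r f xstar x v t
      ≤ T ^ (2 * r / 3) * nagEnergy r f xstar x v T :=
    antitoneOn_rpow_mul_nagEnergy hμ hr hf hqsc hT (by linarith [sq_nonneg r]) hflow
      self_mem_Ici ht ht
  calc f (x t) - f xstar
      ≤ 2 * nagEnergy r f xstar x v t :=
        sub_le_two_mul_nagEnergy ht0.ne' htμ
          (hqsc.quadratic_growth hf hcrit (x t))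
    _ = 2 * (t ^ (2 * r / 3) * nagEnergy r f xstar x v t) * t ^ (-(2 * r / 3)) := by
        rw [Real.rpow_neg ht0.le]
        field_simp
    _ ≤ 2 * (T ^ (2 * r / 3) * nagEnergy r f xstar x v T) * t ^ (-(2 * r / 3)) := by gcongr

theorem nag_flow_strongly_convex_su_boyd_candes_rate_general (hμ : 0 < μ) (hr : 0 ≤ r)
    (hf : Differentiable ℝ f) (hcrit : gradient f xstar = 0)
    (hqsc : IsQuasiStronglyConvexAt μ f xstar)
    (hflow : ∀ᶠ t in atTop, IsNagFlowAt r f x v t) :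
    ∃ T C : ℝ, 0 < T ∧ 0 < C ∧
      ∀ t : ℝ, T ≤ t → f (x t) - f xstar ≤ C * t ^ (-(2 * r / 3)) := by
  have hlarge : ∀ᶠ T : ℝ in atTop, 4 * r ^ 2 ≤ 9 * μ * T ^ 2 :=
    ((tendsto_pow_atTop two_ne_zero).const_mul_atTop (by positivity)).eventually_ge_atTop _
  obtain ⟨T, hT, hTμ, hflowT⟩ :=
    ((eventually_gt_atTop 0).and (hlarge.and (eventually_forall_ge_atTop.2 hflow))).exists
  refine ⟨T, |2 * (T ^ (2 * r / 3) * nagEnergy r f xstar x v T)| + 1, hT, by positivity,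
    fun t ht ↦ (sub_le_mul_rpow_of_isNagFlowAt hμ.le hr hf hcrit hqsc hT hTμ hflowT ht).trans ?_⟩
  have ht0 : 0 < t := hT.trans_le ht
  gcongr
  exact (le_abs_self _).trans (le_add_of_nonneg_right zero_le_one)

end NagFlow

/-- For `μ > 0`, `r > 3` and a continuously differentiable `μ`-strongly
convex `f` with minimizer `x*`, any twice differentiable solution (on `(0,∞)`) of
`ẍ(t) + (r/t)·ẋ(t) + ∇f(x(t)) = 0` satisfies `f(x(t)) − f(x*) = O(t^{−2r/3})`. -/
theorem nag_flow_strongly_convex_su_boyd_candes_rate {n : ℕ}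
    (μ r : ℝ) (hμ : 0 < μ) (hr : 3 < r)
    (f : EuclideanSpace ℝ (Fin n) → ℝ)
    (xstar : EuclideanSpace ℝ (Fin n))
    (hf : ContDiff ℝ 1 f)
    (hmin : ∀ y, f xstar ≤ f y)
    (hsc : ∀ y z : EuclideanSpace ℝ (Fin n),
      f z ≥ f y + ⟪gradient f y, z - y⟫ + μ / 2 * ‖z - y‖ ^ 2)
    (x v a : ℝ → EuclideanSpace ℝ (Fin n))
    (hx : ∀ t : ℝ, 0 < t → HasDerivAt x (v t) t)
    (hv : ∀ t : ℝ, 0 < t → HasDerivAt v (a t) t)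
    (hode : ∀ t : ℝ, 0 < t → a t + (r / t) • v t + gradient f (x t) = 0) :
    ∃ T C : ℝ, 0 < T ∧ 0 < C ∧
      ∀ t : ℝ, T ≤ t → f (x t) - f xstar ≤ C * t ^ (-(2 * r / 3)) := by
  exact nag_flow_strongly_convex_su_boyd_candes_rate_general hμ (by linarith)
    (hf.differentiable one_ne_zero) (gradient_eq_zero_of_isLocalMin (.of_forall hmin))
    (isQuasiStronglyConvexAt_of_strong_convexity hsc)
    ((eventually_gt_atTop 0).mono fun t ht ↦ isNagFlowAt_of_ode (hx t ht) (hv t ht) (hode t ht))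
end
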